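/- arXiv:1210.2472 — 2 statements merged into one kernel-verified Lean document; each statement's English description precedes it below -/
import Mathlib

section
/- Let p be an odd prime, g ∈ ℤ_pˣ a topological generator, K a commutative ring equipped with the discrete topology, and γ ∈ K with γ^{p−1} = 1. Then evaluation at 1 ∈ ℤ_pˣ defines a K-linear bijection from the kernel {f ∈ C(ℤ_pˣ, K) : f(g·x) = γ·f(x) for all x ∈ ℤ_pˣ} onto K. -/
/-!
Reduction modulo `p` is a locally constant surjection `ℤ_pˣ → (ℤ/p)ˣ`, so a topological generator
`g` of `ℤ_pˣ` reduces to a generator of the cyclic group `(ℤ/p)ˣ` of order `p - 1`. As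
`γ ^ (p - 1) = 1`, there is a character `χ` of `(ℤ/p)ˣ` with values in `Kˣ` sending the reduction of
`g` to `γ`, and `x ↦ χ(x mod p) * c` is an element of the kernel with value `c` at `1`. Conversely,
the functional equation determines `f` on the powers of `g` from `f 1`, and these are dense, so a
continuous `f` is determined by `f 1`.
-/

/-- The reduction homomorphism `ℤ_pˣ → (ℤ/p)ˣ`. -/
noncomputable def unitsRed (p : ℕ) [Fact p.Prime] : ℤ_[p]ˣ →* (ZMod p)ˣ :=
  Units.map (PadicInt.toZMod : ℤ_[p] →+* ZMod p).toMonoidHom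

theorem unitsRed_surjective (p : ℕ) [Fact p.Prime] : Function.Surjective (unitsRed p) := by
  haveI : IsLocalHom (PadicInt.toZMod : ℤ_[p] →+* ZMod p) :=
    (ZMod.ringHom_surjective PadicInt.toZMod).isLocalHom
  exact IsLocalRing.surjective_units_map_of_local_ringHom _
    (ZMod.ringHom_surjective PadicInt.toZMod) inferInstance

/-- The fibre of the reduction through `x` contains the open unit ball around `x`. -/
theorem unitsRed_isLocallyConstant (p : ℕ) [Fact p.Prime] : IsLocallyConstant (unitsRed p) := by
  rw [IsLocallyConstant.iff_exists_open]
  intro x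
  refine ⟨{y | ‖(y : ℤ_[p]) - x‖ < 1}, ?_, by simp, ?_⟩
  · exact isOpen_lt (by fun_prop) continuous_const
  · intro y hy
    have hy' : (y : ℤ_[p]) - x ∈ RingHom.ker (PadicInt.toZMod : ℤ_[p] →+* ZMod p) := by
      rw [PadicInt.ker_toZMod, IsLocalRing.mem_maximalIdeal, PadicInt.mem_nonunits]
      exact hy
    rw [RingHom.mem_ker, map_sub, sub_eq_zero] at hy'
    exact Units.ext hy'

theorem mem_zpowers_unitsRed (p : ℕ) [Fact p.Prime] (g : ℤ_[p]ˣ)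
    (hg : Dense ((Subgroup.zpowers g : Subgroup ℤ_[p]ˣ) : Set ℤ_[p]ˣ)) (y : (ZMod p)ˣ) :
    y ∈ Subgroup.zpowers (unitsRed p g) := by
  obtain ⟨x, hx⟩ := unitsRed_surjective p y
  obtain ⟨z, hz, n, rfl⟩ := hg.inter_open_nonempty _
    ((unitsRed_isLocallyConstant p).isOpen_fiber y) ⟨x, hx⟩
  exact ⟨n, by simpa using hz⟩

/-- Let `p` be an odd prime, `g ∈ ℤ_pˣ` a topological generator, `K` a discrete commutative
ring, and `γ ∈ K` with `γ^(p−1) = 1`.  Then evaluation at `1` is a (`K`-linear) bijection from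
the kernel `{f ∈ C(ℤ_pˣ, K) : ∀ x, f(g·x) = γ·f(x)}` onto `K`. -/
theorem stmt6 (p : ℕ) [Fact p.Prime] (hodd : Odd p) (g : ℤ_[p]ˣ)
    (hg : Dense ((Subgroup.zpowers g : Subgroup ℤ_[p]ˣ) : Set ℤ_[p]ˣ))
    (K : Type*) [CommRing K] [TopologicalSpace K] [DiscreteTopology K]
    (γ : K) (hγ : γ ^ (p - 1) = 1) :
    Function.Bijective
      (fun f : {f : C(ℤ_[p]ˣ, K) // ∀ x : ℤ_[p]ˣ, f (g * x) = γ * f x} =>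
        (f : C(ℤ_[p]ˣ, K)) 1) := by
  have hp1 : p - 1 ≠ 0 := by have := (Fact.out : p.Prime).two_le; omega
  let u : Kˣ := Units.ofPowEqOne γ (p - 1) hγ hp1
  have hu : (u : K) = γ := rfl
  have hu1 : u ^ (p - 1) = 1 := Units.ext (by simpa [hu] using hγ)
  constructor
  · rintro ⟨f₁, h₁⟩ ⟨f₂, h₂⟩ h
    have key : ∀ f : C(ℤ_[p]ˣ, K), (∀ x, f (g * x) = γ * f x) →
        ∀ n : ℤ, f (g ^ n) = ((u ^ n : Kˣ) : K) * f 1 := by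
      intro f hf n
      induction n with
      | zero => simp
      | succ n ih => rw [add_comm, zpow_one_add, zpow_one_add, hf, ih, Units.val_mul, hu, mul_assoc]
      | pred n ih =>
        have h3 := hf (g ^ (-(n : ℤ) - 1))
        rw [← zpow_one_add, add_sub_cancel, ih, ← hu] at h3
        rw [sub_eq_add_neg, add_comm, zpow_add u, zpow_neg_one, Units.val_mul, mul_assoc, h3,
          Units.inv_mul_cancel_left, sub_eq_add_neg, add_comm]
    refine Subtype.ext (ContinuousMap.ext (congrFun ?_))
    refine f₁.continuous.ext_on hg f₂.continuous ?_
    rintro _ ⟨n, rfl⟩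
    have h' : f₁ 1 = f₂ 1 := h
    simp only [key f₁ h₁, key f₂ h₂, h']
  · intro c
    have hgen := mem_zpowers_unitsRed p g hg
    have hord : orderOf u ∣ orderOf (unitsRed p g) := by
      rw [orderOf_eq_card_of_forall_mem_zpowers hgen, Nat.card_eq_fintype_card, ZMod.card_units]
      exact orderOf_dvd_of_pow_eq_one hu1
    let χ : (ZMod p)ˣ →* Kˣ := monoidHomOfForallMemZpowers hgen hord
    have hχ : χ (unitsRed p g) = u := monoidHomOfForallMemZpowers_apply_gen hgen hord
    refine ⟨⟨⟨fun x => (χ (unitsRed p x) : K) * c,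
      ((unitsRed_isLocallyConstant p).comp fun y => (χ y : K) * c).continuous⟩, fun x => ?_⟩, ?_⟩
    · simp [hχ, hu, mul_assoc]
    · simp
end

section
/- Let p be a prime. Each digit function f_k : ℤ_p → ZMod p is continuous (with ZMod p discrete), and the (ZMod p)-subalgebra of the algebra C(ℤ_p, ZMod p) of continuous functions generated by the set of all digit functions {f_k : k ∈ ℕ} is the whole algebra: Algebra.adjoin (ZMod p) {f_k : k ∈ ℕ} = ⊤. -/
/-!
By compactness of `ℤ_p`, a continuous `g : ℤ_p → ZMod p` depends only on `x` modulo `p ^ n` for some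
`n` (`exists_factor`). The residue of `x` modulo `p ^ n` is determined by the digits `f_0 x, …,
f_{n-1} x` (`toZModPow_eq_of_digitFun_eq`), and by Fermat's little theorem the indicator function of
the residue class of `y` is `∏_{k<n} (1 - (f_k - f_k y) ^ (p - 1))`, a polynomial in the digit
functions. Hence `g`, a finite linear combination of such indicators, lies in the subalgebra
generated by the digit functions.
-/


/-- The `k`-th digit function `ℤ_p → ZMod p`, sending `x = Σ xᵢ pⁱ` to `x_k`. -/
noncomputable def digitFun (p : ℕ) [Fact p.Prime] (k : ℕ) : ℤ_[p] → ZMod p :=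
  fun x => (((PadicInt.toZModPow (k + 1) x).val / p ^ k : ℕ) : ZMod p)

theorem toZModPow_eq_iff_norm (p : ℕ) [Fact p.Prime] (n : ℕ) (x y : ℤ_[p]) :
    PadicInt.toZModPow n x = PadicInt.toZModPow n y ↔ ‖x - y‖ ≤ (p : ℝ) ^ (-n : ℤ) := by
  rw [PadicInt.norm_le_pow_iff_mem_span_pow, ← PadicInt.ker_toZModPow, RingHom.mem_ker, map_sub,
    sub_eq_zero]

theorem continuous_digitFun (p : ℕ) [Fact p.Prime] (k : ℕ) : Continuous (digitFun p k) := by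
  refine IsLocallyConstant.continuous ((IsLocallyConstant.iff_eventually_eq _).2 fun x => ?_)
  have hp : (0 : ℝ) < (p : ℝ) ^ (-(k + 1 : ℕ) : ℤ) :=
    zpow_pos (by exact_mod_cast (Fact.out : p.Prime).pos) _
  filter_upwards [Metric.ball_mem_nhds x hp] with y hy
  have h := (toZModPow_eq_iff_norm p (k + 1) y x).2 (by
    rw [Metric.mem_ball, dist_eq_norm] at hy
    exact hy.le)
  simp only [digitFun, h]

theorem val_toZModPow_mod (p : ℕ) [Fact p.Prime] (n : ℕ) (x : ℤ_[p]) :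
    (PadicInt.toZModPow (n + 1) x).val % p ^ n = (PadicInt.toZModPow n x).val := by
  rw [← PadicInt.cast_toZModPow n (n + 1) n.le_succ x, ZMod.cast_eq_val, ZMod.val_natCast]

theorem digitFun_val (p : ℕ) [Fact p.Prime] (k : ℕ) (x : ℤ_[p]) :
    (digitFun p k x).val = (PadicInt.toZModPow (k + 1) x).val / p ^ k := by
  rw [digitFun, ZMod.val_natCast, Nat.mod_eq_of_lt]
  apply Nat.div_lt_of_lt_mul
  rw [← pow_succ]
  exact ZMod.val_lt _

/-- The first `n` digits determine the residue modulo `p ^ n`. -/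
theorem toZModPow_eq_of_digitFun_eq (p : ℕ) [Fact p.Prime] (n : ℕ) (x y : ℤ_[p])
    (h : ∀ k < n, digitFun p k x = digitFun p k y) :
    PadicInt.toZModPow n x = PadicInt.toZModPow n y := by
  induction n with
  | zero =>
    have : Subsingleton (ZMod (p ^ 0)) := by rw [pow_zero]; infer_instance
    exact Subsingleton.elim _ _
  | succ n ih =>
    have h1 := ih fun k hk => h k (hk.trans n.lt_succ_self)
    have h2 := congrArg ZMod.val (h n n.lt_succ_self)
    rw [digitFun_val, digitFun_val] at h2
    apply ZMod.val_injective
    rw [← Nat.div_add_mod (PadicInt.toZModPow (n + 1) x).val (p ^ n), h2, val_toZModPow_mod, h1,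
      ← val_toZModPow_mod p n y, Nat.div_add_mod]

theorem digitFun_eq_of_toZModPow_eq (p : ℕ) [Fact p.Prime] (n : ℕ) (x y : ℤ_[p])
    (h : PadicInt.toZModPow n x = PadicInt.toZModPow n y) (k : ℕ) (hk : k < n) :
    digitFun p k x = digitFun p k y := by
  simp only [digitFun, ← PadicInt.cast_toZModPow (k + 1) n hk, h]

/-- A continuous function on `ℤ_p` with discrete values is constant on residue classes modulo a
sufficiently high power of `p`. -/
theorem exists_factor (p : ℕ) [Fact p.Prime] (g : C(ℤ_[p], ZMod p)) :
    ∃ n : ℕ, ∀ x y, PadicInt.toZModPow n x = PadicInt.toZModPow n y → g x = g y := by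
  obtain ⟨δ, hδ, H⟩ := lebesgue_number_lemma_of_metric (s := (Set.univ : Set ℤ_[p]))
    (c := fun a : ZMod p => g ⁻¹' {a}) isCompact_univ
    (fun a => (isOpen_discrete _).preimage g.continuous)
    (fun x _ => Set.mem_iUnion.2 ⟨g x, rfl⟩)
  obtain ⟨n, hn⟩ := PadicInt.exists_pow_neg_lt p hδ
  refine ⟨n, fun x y hxy => ?_⟩
  obtain ⟨a, ha⟩ := H y trivial
  have hx : g x = a := ha (by
    rw [Metric.mem_ball, dist_eq_norm]
    exact ((toZModPow_eq_iff_norm p n x y).1 hxy).trans_lt hn)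
  have hy : g y = a := ha (Metric.mem_ball_self hδ)
  rw [hx, hy]

/-- The `k`-th digit function as an element of `C(ℤ_p, ZMod p)`. -/
noncomputable def digitMap (p : ℕ) [Fact p.Prime] (k : ℕ) : C(ℤ_[p], ZMod p) :=
  ⟨digitFun p k, continuous_digitFun p k⟩

/-- The indicator function of the residue class of `y` modulo `p ^ n`, written as a polynomial in
the digit functions. -/
noncomputable def residueIndicator (p : ℕ) [Fact p.Prime] (n : ℕ) (y : ℤ_[p]) :
    C(ℤ_[p], ZMod p) :=
  ∏ k ∈ Finset.range n,
    (1 - (digitMap p k - algebraMap (ZMod p) C(ℤ_[p], ZMod p) (digitFun p k y)) ^ (p - 1))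

open Classical in
theorem residueIndicator_apply (p : ℕ) [Fact p.Prime] (n : ℕ) (x y : ℤ_[p]) :
    residueIndicator p n y x =
      if PadicInt.toZModPow n x = PadicInt.toZModPow n y then 1 else 0 := by
  have hp : p - 1 ≠ 0 := Nat.sub_ne_zero_of_lt (Fact.out : p.Prime).one_lt
  have hval : residueIndicator p n y x =
      ∏ k ∈ Finset.range n, (1 - (digitFun p k x - digitFun p k y) ^ (p - 1)) := by
    simp [residueIndicator, ContinuousMap.prod_apply, digitMap]
  rw [hval]
  split_ifs with h
  · refine Finset.prod_eq_one fun k hk => ?_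
    rw [digitFun_eq_of_toZModPow_eq p n x y h k (Finset.mem_range.1 hk), sub_self, zero_pow hp,
      sub_zero]
  · have : ∃ k < n, digitFun p k x ≠ digitFun p k y := by
      by_contra! hc
      exact h (toZModPow_eq_of_digitFun_eq p n x y hc)
    obtain ⟨k, hk, hne⟩ := this
    refine Finset.prod_eq_zero (Finset.mem_range.2 hk) ?_
    rw [ZMod.pow_card_sub_one_eq_one (sub_ne_zero.2 hne), sub_self]

/-- Each digit function `f_k : ℤ_p → ZMod p` is continuous (with `ZMod p` discrete), and the
`(ZMod p)`-subalgebra of `C(ℤ_p, ZMod p)` generated by the digit functions is everything. -/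
theorem stmt10 (p : ℕ) [Fact p.Prime] :
    (∀ k : ℕ, Continuous (digitFun p k)) ∧
    Algebra.adjoin (ZMod p)
      {f : C(ℤ_[p], ZMod p) | ∃ k : ℕ, ⇑f = digitFun p k} = ⊤ := by
  refine ⟨continuous_digitFun p, eq_top_iff.2 fun g _ => ?_⟩
  obtain ⟨n, hn⟩ := exists_factor p g
  have hsum : g = ∑ a : ZMod (p ^ n),
      g (a.val : ℤ_[p]) • residueIndicator p n (a.val : ℤ_[p]) := by
    ext x
    simp only [ContinuousMap.sum_apply, ContinuousMap.smul_apply, residueIndicator_apply,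
      map_natCast, ZMod.natCast_zmod_val, smul_eq_mul, mul_ite, mul_one, mul_zero,
      Finset.sum_ite_eq, Finset.mem_univ, if_true]
    exact hn _ _ (by simp)
  rw [hsum]
  refine Subalgebra.sum_mem _ fun a _ =>
    Subalgebra.smul_mem _ (Subalgebra.prod_mem _ fun k _ => ?_) _
  have hk : digitMap p k ∈ Algebra.adjoin (ZMod p)
      {f : C(ℤ_[p], ZMod p) | ∃ k : ℕ, ⇑f = digitFun p k} := Algebra.subset_adjoin ⟨k, rfl⟩
  exact sub_mem (one_mem _) (pow_mem (sub_mem hk (Subalgebra.algebraMap_mem _ _)) _)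
end
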